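/- Let n ≥ 1 and let a_1, …, a_n and r_1, …, r_n be positive integers such that 1 ≤ r_j < a_j and gcd(r_j, a_j) = 1 for every j. Then there exists an integer k such that a_j ∤ k·r_j for every j, and, writing ρ_j for the unique integer with 1 ≤ ρ_j < a_j and ρ_j ≡ k·r_j (mod a_j), one has lcm(a_1, …, a_n) · (ρ_1 · ρ_2 ⋯ ρ_n) ≤ a_1 · a_2 ⋯ a_n. -/

import Mathlib

/-!
The residues `x j` are fixed one index at a time, keeping `lcm (a j) * ∏ x j ≤ ∏ a j` over the
indices treated so far. If `M` is the lcm of the moduli already treated, `k` may still be changed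
by multiples of `M`; this makes `k * r j` run through a full class modulo `t = gcd M (a j)`, so
`x j` can be taken in `[1, t]`, while the lcm grows by the factor `a j / t`
(`SmallResidues.insert`).

This alone does not prevent `a j ∣ k * r j`. To ensure it, begin with a maximal set `S` of indices
on which all residues can be made equal to `1`. Whenever `a j` is coprime to the lcm over `S` we
have `t = 1`, so `S` could be enlarged by `j`; hence every `a j` shares a prime `p` with some
`a i`, `i ∈ S`. Then `k * r i ≡ 1` modulo `p`, so `p ∤ k`, and therefore `a j ∤ k * r j`.
-/

/-- On the indices in `T`, the classes of `k * r j` modulo `a j` have positive representatives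
`x j`, not necessarily reduced, with `lcm (a j) * ∏ x j ≤ ∏ a j`. -/
def SmallResidues {n : ℕ} (a r : Fin n → ℕ) (T : Finset (Fin n)) (k : ℤ) : Prop :=
  ∃ x : Fin n → ℤ, (∀ j ∈ T, 1 ≤ x j ∧ x j ≡ k * (r j : ℤ) [ZMOD (a j : ℕ)]) ∧
    ((T.lcm a : ℕ) : ℤ) * ∏ j ∈ T, x j ≤ ∏ j ∈ T, (a j : ℤ)

/-- If `gcd r a = 1`, moving `k` within its class modulo `M` brings the class of `k * r` modulo `a`
to a representative in `[1, gcd M a]`. -/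
lemma exists_shift (M a r : ℕ) (ha : 0 < a) (hr : Nat.gcd r a = 1) (k : ℤ) :
    ∃ k' y : ℤ, k' ≡ k [ZMOD (M : ℕ)] ∧ 1 ≤ y ∧ y ≤ (Nat.gcd M a : ℤ) ∧
      y ≡ k' * (r : ℤ) [ZMOD (a : ℕ)] := by
  have ht : (0 : ℤ) < (Nat.gcd M a : ℤ) := by exact_mod_cast Nat.gcd_pos_of_pos_right M ha
  set t : ℤ := (Nat.gcd M a : ℤ) with htdef
  -- The shift by `1` makes the representative modulo `t` lie in `[1, t]` rather than `[0, t - 1]`.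
  set y : ℤ := (k * r - 1) % t + 1 with hy
  have h0 := Int.emod_nonneg (k * r - 1) ht.ne'
  have h1 := Int.emod_lt_of_pos (k * r - 1) ht
  have hdvd : t ∣ y - k * r := by
    refine ⟨-((k * r - 1) / t), ?_⟩
    have := Int.emod_add_mul_ediv (k * r - 1) t
    rw [hy]; linarith
  obtain ⟨c, hc⟩ := hdvd
  have hb : t = (M : ℤ) * Nat.gcdA M a + a * Nat.gcdB M a := Nat.gcd_eq_gcd_ab M a
  have hone : (1 : ℤ) = (r : ℤ) * Nat.gcdA r a + a * Nat.gcdB r a := by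
    rw [← Nat.gcd_eq_gcd_ab, hr]; rfl
  -- By Bézout, `t ≡ M * gcdA M a` and `1 ≡ r * gcdA r a` modulo `a`.
  refine ⟨k + M * (Nat.gcdA M a * c * Nat.gcdA r a), y, ?_, by omega, by omega, ?_⟩
  · apply Int.ModEq.symm
    rw [Int.modEq_iff_dvd]
    exact ⟨Nat.gcdA M a * c * Nat.gcdA r a, by ring⟩
  · apply Int.ModEq.symm
    rw [Int.modEq_iff_dvd]
    refine ⟨M * Nat.gcdA M a * c * Nat.gcdB r a + Nat.gcdB M a * c, ?_⟩
    have : y = k * r + t * c := by linarith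
    rw [this, hb]
    linear_combination (M * Nat.gcdA M a * c : ℤ) * hone

/-- One more index can be treated without changing `k` modulo the previous moduli; a modulus
coprime to all previous ones even gets residue `1`. -/
lemma SmallResidues.insert {n : ℕ} {a r : Fin n → ℕ}
    (hra : ∀ j, 1 ≤ r j ∧ r j < a j) (hcop : ∀ j, Nat.gcd (r j) (a j) = 1)
    {T : Finset (Fin n)} {k : ℤ} (h : SmallResidues a r T k) {j : Fin n} (hj : j ∉ T) :
    ∃ k' : ℤ, k' ≡ k [ZMOD (T.lcm a : ℕ)] ∧ SmallResidues a r (Insert.insert j T) k' ∧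
      (Nat.Coprime (T.lcm a) (a j) → k' * (r j : ℤ) ≡ 1 [ZMOD (a j : ℕ)]) := by
  obtain ⟨x, hx, hprod⟩ := h
  have haj : 0 < a j := by have := hra j; omega
  obtain ⟨k', y, hk, hy1, hyt, hy⟩ := exists_shift (T.lcm a) (a j) (r j) haj (hcop j) k
  have hne : ∀ i ∈ T, i ≠ j := fun i hi e => hj (e ▸ hi)
  refine ⟨k', hk, ⟨Function.update x j y, ?_, ?_⟩, ?_⟩
  · intro i hi
    rcases Finset.mem_insert.1 hi with rfl | hi
    · simpa using ⟨hy1, hy⟩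
    · rw [Function.update_of_ne (hne i hi)]
      refine ⟨(hx i hi).1, (hx i hi).2.trans (Int.ModEq.mul_right _ ?_)⟩
      exact (hk.of_dvd (by exact_mod_cast Finset.dvd_lcm hi)).symm
  · rw [Finset.prod_insert hj, Finset.prod_insert hj, Finset.lcm_insert]
    have e : ∏ i ∈ T, Function.update x j y i = ∏ i ∈ T, x i :=
      Finset.prod_congr rfl fun i hi => Function.update_of_ne (hne i hi) _ _
    rw [e, Function.update_self]
    have hP : 0 ≤ ∏ i ∈ T, x i := Finset.prod_nonneg fun i hi => by linarith [(hx i hi).1]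
    have hl : ((GCDMonoid.lcm (a j) (T.lcm a) : ℕ) : ℤ) * (Nat.gcd (T.lcm a) (a j) : ℤ)
        = a j * (T.lcm a : ℕ) := by
      rw [Nat.gcd_comm, mul_comm]
      exact_mod_cast Nat.gcd_mul_lcm (a j) (T.lcm a)
    calc ((GCDMonoid.lcm (a j) (T.lcm a) : ℕ) : ℤ) * (y * ∏ i ∈ T, x i)
        ≤ ((GCDMonoid.lcm (a j) (T.lcm a) : ℕ) : ℤ)
            * ((Nat.gcd (T.lcm a) (a j) : ℤ) * ∏ i ∈ T, x i) := by gcongr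
      _ = a j * (((T.lcm a : ℕ) : ℤ) * ∏ i ∈ T, x i) := by rw [← mul_assoc, hl, mul_assoc]
      _ ≤ _ := by gcongr
  · intro hc
    rw [Nat.Coprime] at hc
    rw [hc] at hyt
    have : y = 1 := le_antisymm (by exact_mod_cast hyt) hy1
    rw [← this]; exact hy.symm

lemma SmallResidues.union {n : ℕ} {a r : Fin n → ℕ}
    (hra : ∀ j, 1 ≤ r j ∧ r j < a j) (hcop : ∀ j, Nat.gcd (r j) (a j) = 1)
    {S : Finset (Fin n)} {k : ℤ} (h : SmallResidues a r S k) (T : Finset (Fin n)) :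
    ∃ k' : ℤ, k' ≡ k [ZMOD (S.lcm a : ℕ)] ∧ SmallResidues a r (T ∪ S) k' := by
  induction T using Finset.induction_on with
  | empty => exact ⟨k, rfl, by simpa using h⟩
  | insert j T _ ih =>
    obtain ⟨k₁, hk₁, h₁⟩ := ih
    rw [Finset.insert_union]
    by_cases hj : j ∈ T ∪ S
    · rw [Finset.insert_eq_of_mem hj]; exact ⟨k₁, hk₁, h₁⟩
    · obtain ⟨k₂, hk₂, h₂, -⟩ := h₁.insert hra hcop hj
      refine ⟨k₂, (hk₂.of_dvd ?_).trans hk₁, h₂⟩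
      exact_mod_cast Finset.lcm_mono Finset.subset_union_right

/-- The starting set `S`: all residues there equal `1`, and by maximality no modulus is
coprime to the lcm over `S`. -/
lemma exists_unit_set {n : ℕ} {a r : Fin n → ℕ}
    (hra : ∀ j, 1 ≤ r j ∧ r j < a j) (hcop : ∀ j, Nat.gcd (r j) (a j) = 1) :
    ∃ (S : Finset (Fin n)) (k : ℤ), SmallResidues a r S k ∧
      (∀ i ∈ S, k * (r i : ℤ) ≡ 1 [ZMOD (a i : ℕ)]) ∧
      ∀ j, ¬ Nat.Coprime (S.lcm a) (a j) := by
  obtain ⟨S, hS⟩ := (Set.toFinite {S : Finset (Fin n) | ∃ k : ℤ, SmallResidues a r S k ∧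
      ∀ i ∈ S, k * (r i : ℤ) ≡ 1 [ZMOD (a i : ℕ)]}).exists_maximal
    ⟨∅, 0, ⟨fun _ => 1, by simp, by simp⟩, by simp⟩
  obtain ⟨k, hk, hu⟩ := hS.prop
  refine ⟨S, k, hk, hu, fun j hc => ?_⟩
  by_cases hj : j ∈ S
  · have h1 := Nat.Coprime.eq_one_of_dvd hc.symm (Finset.dvd_lcm hj)
    have := hra j
    omega
  · obtain ⟨k', hk', h', h1⟩ := hk.insert hra hcop hj
    have hmem : Insert.insert j S ⊆ S := by
      refine hS.le_of_ge ⟨k', h', fun i hi => ?_⟩ (Finset.subset_insert j S)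
      rcases Finset.mem_insert.1 hi with rfl | hi
      · exact h1 hc
      · refine (Int.ModEq.mul_right _ (hk'.of_dvd ?_)).trans (hu i hi)
        exact_mod_cast Finset.dvd_lcm hi
    exact hj (hmem (Finset.mem_insert_self j S))


/-- Lemma 5.2 (first part): given positive integers `a j`, `r j` with
`1 ≤ r j < a j` and `gcd (r j) (a j) = 1`, there is an integer `k` such that
`a j ∤ k * r j` for all `j`, and the reduced residues `ρ j` of `k * r j`
modulo `a j` satisfy `lcm (a 1, …, a n) * ∏ ρ j ≤ ∏ a j`. -/
theorem stmt_0 (n : ℕ) (hn : 1 ≤ n) (a r : Fin n → ℕ)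
    (hra : ∀ j, 1 ≤ r j ∧ r j < a j) (hcop : ∀ j, Nat.gcd (r j) (a j) = 1) :
    ∃ k : ℤ, (∀ j, ¬ ((a j : ℤ) ∣ k * (r j : ℤ))) ∧
      ∃ ρ : Fin n → ℤ,
        (∀ j, 1 ≤ ρ j ∧ ρ j < (a j : ℤ) ∧ ρ j ≡ k * (r j : ℤ) [ZMOD (a j : ℕ)]) ∧
        ((Finset.univ.lcm a : ℕ) : ℤ) * ∏ j, ρ j ≤ ∏ j, (a j : ℤ) := by
  obtain ⟨S, k₀, hS, hu, hmax⟩ := exists_unit_set hra hcop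
  obtain ⟨k, hk, x, hx, hprod⟩ := hS.union hra hcop Finset.univ
  rw [Finset.union_eq_left.2 (Finset.subset_univ S)] at hx hprod
  have hnd : ∀ j, ¬ ((a j : ℤ) ∣ k * (r j : ℤ)) := by
    intro j hd
    obtain ⟨p, hp, hpS, hpj⟩ := Nat.Prime.not_coprime_iff_dvd.1 (hmax j)
    have hpZ : Prime (p : ℤ) := Nat.prime_iff_prime_int.1 hp
    have hpk : (p : ℤ) ∣ k := by
      refine (hpZ.dvd_or_dvd ((Int.natCast_dvd_natCast.2 hpj).trans hd)).resolve_right ?_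
      intro h
      have := Nat.dvd_gcd (Int.natCast_dvd_natCast.1 h) hpj
      rw [hcop j] at this
      exact hp.one_lt.ne' (Nat.dvd_one.1 this)
    obtain ⟨i, hi, hpi⟩ := (Prime.dvd_finsetProd_iff hp.prime a).1
      (hpS.trans (Finset.lcm_dvd fun i hi => Finset.dvd_prod_of_mem a hi))
    have hki : k * (r i : ℤ) ≡ 1 [ZMOD (p : ℤ)] := by
      refine ((Int.ModEq.mul_right _ (hk.of_dvd ?_)).trans (hu i hi |>.of_dvd ?_))
      · exact_mod_cast hpS
      · exact_mod_cast hpi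
    have h1 : (p : ℤ) ∣ 1 := by
      have := (Int.modEq_iff_dvd.1 hki).add (hpk.mul_right (r i : ℤ))
      simpa using this
    exact hpZ.not_dvd_one h1
  have hapos : ∀ j, (0 : ℤ) < a j := fun j => by have := hra j; omega
  refine ⟨k, hnd, fun j => (k * r j) % (a j : ℤ), fun j => ⟨?_, ?_, Int.mod_modEq _ _⟩, ?_⟩
  · have h0 := Int.emod_nonneg (k * r j) (hapos j).ne'
    have h1 : (k * r j) % (a j : ℤ) ≠ 0 := fun h => hnd j (Int.dvd_of_emod_eq_zero h)
    dsimp only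
    omega
  · exact Int.emod_lt_of_pos _ (hapos j)
  · refine le_trans ?_ hprod
    refine mul_le_mul_of_nonneg_left (Finset.prod_le_prod ?_ ?_) (by positivity)
    · exact fun j _ => Int.emod_nonneg _ (hapos j).ne'
    · intro j _
      -- A nonnegative integer is at least its own remainder.
      have hj := hx j (Finset.mem_univ j)
      rw [← hj.2.eq]
      have h0 : 0 ≤ x j / (a j : ℤ) := Int.ediv_nonneg (by linarith [hj.1]) (hapos j).le
      nlinarith [Int.emod_add_mul_ediv (x j) (a j), mul_nonneg (hapos j).le h0]
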